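/- Let I be an index set and, for each i ∈ I, let G_i be a group generated by a finite subset S_i, and assume each G_i is amenable, i.e. for every nonempty finite T ⊆ G_i and δ > 0 there exists a nonempty finite F ⊆ G_i with #(F \ F·g) ≤ δ·#F for all g ∈ T. Then the following are equivalent: (1) the family {(G_i, S_i)}_{i∈I} is uniformly amenable: for every ε > 0 there exist D ∈ ℕ and functions f_i : G_i → [0,∞) with Σ_{γ∈G_i} f_i(γ)² = 1, Σ_{γ∈G_i} (f_i(γ) − f_i(γs))² ≤ ε² for every s ∈ S_i, and supp(f_i) ⊆ B(1_{G_i}, D); (2) the family {(G_i, S_i)}_{i∈I} has uniform Property A with respect to the word metrics: for every ε > 0 and every R ∈ ℕ there exist D ∈ ℕ and maps ξ_i assigning to each x ∈ G_i a function ξ_{i,x} : G_i → [0,∞) with Σ_{γ∈G_i} ξ_{i,x}(γ)² = 1, such that Σ_{γ∈G_i} (ξ_{i,x}(γ) − ξ_{i,y}(γ))² ≤ ε² whenever x⁻¹y ∈ B(1_{G_i}, R), and supp(ξ_{i,x}) ⊆ x·B(1_{G_i}, D) for every x ∈ G_i and i ∈ I. -/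

import Mathlib

/-- The word-metric ball `B(1_G, D)` with respect to a generating set `S`:
the set of elements of `G` expressible as a product of at most `D` elements
of `S ∪ S⁻¹`. -/
def wordBall {G : Type*} [Group G] (S : Set G) (D : ℕ) : Set G :=
  {g | ∃ l : List G, l.length ≤ D ∧ (∀ x ∈ l, x ∈ S ∨ x⁻¹ ∈ S) ∧ l.prod = g}

/-!
A unit vector `f` of `ℓ²(G)` that is almost invariant under right translation yields the kernel
`ξ x γ = f (γ⁻¹ * x)`, since `‖ξ x - ξ y‖` is the distance from `f` to its translate by `x⁻¹ * y`.

Conversely, amenability provides an almost invariant unit vector `w`, with no control on its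
support, and Property A a kernel `ξ`, with no equivariance. Put `k y γ = w y * ξ y γ` and let `f h`
be the `ℓ²`-norm of `k` along the diagonal `{(y, y * h⁻¹)}`. These diagonals partition `G × G`, so
`‖f‖ = ‖k‖ = 1`; the support of `f` is controlled by that of `ξ` alone; and translating `f` by `s`
amounts to replacing `k y` by `k (y * s)`, so that the reverse triangle inequality gives
`‖f - s·f‖ ≤ ‖(w y * ξ y - w (y * s) * ξ (y * s))_y‖ ≤ ‖(w y * (ξ y - ξ (y * s)))_y‖ + ‖w - s·w‖`.
-/

open scoped lp symmDiff

section L2Norm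

variable {α β : Type*}

/-- The `ℓ²`-norm of a real function, with junk value `0` when `f` is not square-summable
(`¬ Memℓp f 2`). Unlike the norm of the type `ℓ²(α, ℝ)` it applies to bare functions. -/
noncomputable def l2Norm (f : α → ℝ) : ℝ := √(∑' a, f a ^ 2)

theorem l2Norm_nonneg (f : α → ℝ) : 0 ≤ l2Norm f := Real.sqrt_nonneg _

theorem sq_l2Norm (f : α → ℝ) : l2Norm f ^ 2 = ∑' a, f a ^ 2 :=
  Real.sq_sqrt (tsum_nonneg fun _ => sq_nonneg _)

theorem l2Norm_le_iff {f : α → ℝ} {c : ℝ} (hc : 0 ≤ c) :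
    l2Norm f ≤ c ↔ ∑' a, f a ^ 2 ≤ c ^ 2 :=
  Real.sqrt_le_left hc

theorem l2Norm_eq_one_iff {f : α → ℝ} : l2Norm f = 1 ↔ ∑' a, f a ^ 2 = 1 := Real.sqrt_eq_one

theorem l2Norm_abs (f : α → ℝ) : l2Norm (fun a => |f a|) = l2Norm f := by
  simp only [l2Norm, sq_abs]

theorem l2Norm_const_mul (c : ℝ) (f : α → ℝ) : l2Norm (fun a => c * f a) = |c| * l2Norm f := by
  simp only [l2Norm, mul_pow, tsum_mul_left, Real.sqrt_mul (sq_nonneg c), Real.sqrt_sq_eq_abs]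

theorem abs_l2Norm_const_mul_le {f : α → ℝ} {c : ℝ} (hf : l2Norm f ≤ c) (t : ℝ) :
    |l2Norm fun a => t * f a| ≤ |c * t| := by
  rw [abs_of_nonneg (l2Norm_nonneg _), l2Norm_const_mul, mul_comm, abs_mul]
  exact mul_le_mul_of_nonneg_right (hf.trans (le_abs_self c)) (abs_nonneg t)

theorem l2Norm_comp_equiv (e : α ≃ β) (f : β → ℝ) : l2Norm (fun a => f (e a)) = l2Norm f :=
  congrArg Real.sqrt (e.tsum_eq fun b => f b ^ 2)

theorem memℓp_two_iff_summable_sq {f : α → ℝ} : Memℓp f 2 ↔ Summable fun a => f a ^ 2 := by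
  simp [memℓp_gen_iff (p := 2) (by norm_num)]

theorem memℓp_two_comp_equiv (e : α ≃ β) {f : β → ℝ} (hf : Memℓp f 2) :
    Memℓp (fun a => f (e a)) 2 :=
  memℓp_two_iff_summable_sq.2 (e.summable_iff.2 (memℓp_two_iff_summable_sq.1 hf))

theorem memℓp_two_of_l2Norm_ne_zero {f : α → ℝ} (hf : l2Norm f ≠ 0) : Memℓp f 2 := by
  rw [memℓp_two_iff_summable_sq]
  contrapose! hf
  rw [l2Norm, tsum_eq_zero_of_not_summable hf, Real.sqrt_zero]

theorem memℓp_two_of_l2Norm_eq_one {f : α → ℝ} (hf : l2Norm f = 1) : Memℓp f 2 :=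
  memℓp_two_of_l2Norm_ne_zero (hf ▸ one_ne_zero)

theorem memℓp_two_mono {f g : α → ℝ} (hg : Memℓp g 2) (h : ∀ a, |f a| ≤ |g a|) : Memℓp f 2 :=
  memℓp_two_iff_summable_sq.2 <| .of_nonneg_of_le (fun _ => sq_nonneg _)
    (fun a => sq_le_sq.2 (h a)) (memℓp_two_iff_summable_sq.1 hg)

theorem l2Norm_mono {f g : α → ℝ} (hg : Memℓp g 2) (h : ∀ a, |f a| ≤ |g a|) :
    l2Norm f ≤ l2Norm g :=
  Real.sqrt_le_sqrt <| (memℓp_two_iff_summable_sq.1 (memℓp_two_mono hg h)).tsum_le_tsum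
    (fun a => sq_le_sq.2 (h a)) (memℓp_two_iff_summable_sq.1 hg)

theorem l2Norm_coe_lp (f : ℓ²(α, ℝ)) : l2Norm f = ‖f‖ := by
  rw [lp.norm_eq_tsum_rpow (by norm_num), l2Norm, Real.sqrt_eq_rpow]
  simp

theorem l2Norm_add_le {f g : α → ℝ} (hf : Memℓp f 2) (hg : Memℓp g 2) :
    l2Norm (fun a => f a + g a) ≤ l2Norm f + l2Norm g := by
  have h := norm_add_le (⟨f, hf⟩ : ℓ²(α, ℝ)) ⟨g, hg⟩
  rwa [← l2Norm_coe_lp, ← l2Norm_coe_lp, ← l2Norm_coe_lp] at h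

theorem abs_l2Norm_sub_l2Norm_le {f g : α → ℝ} (hf : Memℓp f 2) (hg : Memℓp g 2) :
    |l2Norm f - l2Norm g| ≤ l2Norm fun a => f a - g a := by
  have h := abs_norm_sub_norm_le (⟨f, hf⟩ : ℓ²(α, ℝ)) ⟨g, hg⟩
  rwa [← l2Norm_coe_lp, ← l2Norm_coe_lp, ← l2Norm_coe_lp] at h

theorem memℓp_two_prod_iff {f : α × β → ℝ} :
    Memℓp f 2 ↔ (∀ a, Memℓp (fun b => f (a, b)) 2) ∧
      Memℓp (fun a => l2Norm fun b => f (a, b)) 2 := by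
  simp only [memℓp_two_iff_summable_sq, sq_l2Norm]
  exact summable_prod_of_nonneg fun _ => sq_nonneg _

theorem l2Norm_prod {f : α × β → ℝ} (hf : Memℓp f 2) :
    l2Norm f = l2Norm fun a => l2Norm fun b => f (a, b) := by
  rw [l2Norm, l2Norm, (memℓp_two_iff_summable_sq.1 hf).tsum_prod]
  simp only [sq_l2Norm]

end L2Norm

section WeightedKernel

variable {α β : Type*} {w : α → ℝ} {k : α → β → ℝ} {c : ℝ}

theorem memℓp_two_weighted (hw : Memℓp w 2) (hk : ∀ a, Memℓp (k a) 2)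
    (hkc : ∀ a, l2Norm (k a) ≤ c) : Memℓp (fun p : α × β => w p.1 * k p.1 p.2) 2 :=
  memℓp_two_prod_iff.2 ⟨fun a => (hk a).const_mul (w a),
    memℓp_two_mono (hw.const_mul c) fun a => abs_l2Norm_const_mul_le (hkc a) (w a)⟩

theorem memℓp_two_weighted_of_unit (hw : Memℓp w 2) (hk : ∀ a, l2Norm (k a) = 1) :
    Memℓp (fun p : α × β => w p.1 * k p.1 p.2) 2 :=
  memℓp_two_weighted hw (fun a => memℓp_two_of_l2Norm_eq_one (hk a)) fun a => (hk a).le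

theorem l2Norm_weighted_le (hw : Memℓp w 2) (hk : ∀ a, Memℓp (k a) 2)
    (hkc : ∀ a, l2Norm (k a) ≤ c) (hc : 0 ≤ c) :
    l2Norm (fun p : α × β => w p.1 * k p.1 p.2) ≤ c * l2Norm w := by
  rw [l2Norm_prod (memℓp_two_weighted hw hk hkc), ← abs_of_nonneg hc, ← l2Norm_const_mul]
  exact l2Norm_mono (hw.const_mul c) fun a => abs_l2Norm_const_mul_le (hkc a) (w a)

theorem l2Norm_weighted_of_unit (hw : Memℓp w 2) (hk : ∀ a, l2Norm (k a) = 1) :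
    l2Norm (fun p : α × β => w p.1 * k p.1 p.2) = l2Norm w := by
  rw [l2Norm_prod (memℓp_two_weighted_of_unit hw hk)]
  simp only [l2Norm_const_mul, hk, mul_one, l2Norm_abs]

theorem l2Norm_weighted_sub_weighted_le {w' : α → ℝ} {k' : α → β → ℝ} (hw : Memℓp w 2)
    (hw' : Memℓp w' 2) (hk : ∀ a, l2Norm (k a) = 1) (hk' : ∀ a, l2Norm (k' a) = 1)
    (hkk' : ∀ a, l2Norm (fun b => k a b - k' a b) ≤ c) (hc : 0 ≤ c) :
    l2Norm (fun p : α × β => w p.1 * k p.1 p.2 - w' p.1 * k' p.1 p.2) ≤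
      c * l2Norm w + l2Norm fun a => w a - w' a := by
  have hksub (a : α) : Memℓp (fun b => k a b - k' a b) 2 :=
    (memℓp_two_of_l2Norm_eq_one (hk a)).sub (memℓp_two_of_l2Norm_eq_one (hk' a))
  have hwsub : Memℓp (fun a => w a - w' a) 2 := hw.sub hw'
  have hkernel := memℓp_two_weighted hw hksub hkk'
  have hkernel' := memℓp_two_weighted_of_unit hwsub hk'
  calc l2Norm (fun p : α × β => w p.1 * k p.1 p.2 - w' p.1 * k' p.1 p.2)
      = l2Norm fun p : α × β =>
          w p.1 * (k p.1 p.2 - k' p.1 p.2) + (w p.1 - w' p.1) * k' p.1 p.2 := by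
        congr 1 with p
        ring
    _ ≤ l2Norm (fun p : α × β => w p.1 * (k p.1 p.2 - k' p.1 p.2)) +
          l2Norm fun p : α × β => (w p.1 - w' p.1) * k' p.1 p.2 := l2Norm_add_le hkernel hkernel'
    _ ≤ c * l2Norm w + l2Norm fun a => w a - w' a :=
        add_le_add (l2Norm_weighted_le hw hksub hkk' hc) (l2Norm_weighted_of_unit hwsub hk').le

end WeightedKernel

section Displacement

variable {G : Type*} [Group G] {S : Set G} {f : G → ℝ}

/-- The `ℓ²`-distance between `f` and its right translate by `g`; as a function of `g` it is a
length function on the group. -/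
noncomputable def displacement (f : G → ℝ) (g : G) : ℝ := l2Norm fun γ => f γ - f (γ * g)

theorem memℓp_two_mul_right (hf : Memℓp f 2) (g : G) : Memℓp (fun γ => f (γ * g)) 2 :=
  memℓp_two_comp_equiv (Equiv.mulRight g) hf

theorem displacement_one (f : G → ℝ) : displacement f 1 = 0 := by
  simp [displacement, l2Norm]

theorem displacement_inv (f : G → ℝ) (g : G) : displacement f g⁻¹ = displacement f g := by
  rw [displacement, ← l2Norm_comp_equiv (Equiv.mulRight g)]
  simp only [displacement, l2Norm, Equiv.coe_mulRight, mul_inv_cancel_right, sub_sq_comm]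

theorem displacement_mul_le (hf : Memℓp f 2) (g h : G) :
    displacement f (g * h) ≤ displacement f g + displacement f h := by
  have hfg := memℓp_two_mul_right hf g
  have hfh := memℓp_two_mul_right hf h
  calc displacement f (g * h)
      = l2Norm fun γ => (f γ - f (γ * g)) + (f (γ * g) - f (γ * g * h)) := by
        simp only [displacement, sub_add_sub_cancel, mul_assoc]
    _ ≤ displacement f g + l2Norm fun γ => f (γ * g) - f (γ * g * h) :=
        l2Norm_add_le (hf.sub hfg) (memℓp_two_mul_right (hf.sub hfh) g)
    _ = displacement f g + displacement f h := by
        rw [displacement, displacement,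
          ← l2Norm_comp_equiv (Equiv.mulRight g) fun γ => f γ - f (γ * h)]
        rfl

theorem displacement_le_of_mem_wordBall {δ : ℝ} (hf : Memℓp f 2) (hδ : 0 ≤ δ)
    (hS : ∀ s ∈ S, displacement f s ≤ δ) {R : ℕ} {g : G} (hg : g ∈ wordBall S R) :
    displacement f g ≤ R * δ := by
  obtain ⟨l, hlR, hlS, rfl⟩ := hg
  suffices h : displacement f l.prod ≤ l.length * δ from h.trans (by gcongr)
  clear hlR
  induction l with
  | nil => simp [displacement_one]
  | cons a l ih =>
    obtain ⟨ha, hl⟩ := List.forall_mem_cons.1 hlS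
    have haδ : displacement f a ≤ δ :=
      ha.elim (hS a) fun ha' => displacement_inv f a ▸ hS _ ha'
    calc displacement f (a :: l).prod
        ≤ displacement f a + displacement f l.prod := by
          rw [List.prod_cons]
          exact displacement_mul_le hf a l.prod
      _ ≤ δ + l.length * δ := add_le_add haδ (ih hl)
      _ = (a :: l).length * δ := by
          rw [List.length_cons]
          push_cast
          ring

end Displacement

section WordBall

variable {G : Type*} [Group G] {S : Set G}

theorem inv_mem_wordBall {D : ℕ} {g : G} (hg : g ∈ wordBall S D) : g⁻¹ ∈ wordBall S D := by
  obtain ⟨l, hlD, hlS, rfl⟩ := hg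
  refine ⟨(l.map (·⁻¹)).reverse, by simpa using hlD, ?_, (List.prod_inv_reverse l).symm⟩
  intro x hx
  have hx' : x⁻¹ ∈ l := by simpa using hx
  simpa [or_comm] using hlS x⁻¹ hx'

theorem subset_wordBall_one (S : Set G) : S ⊆ wordBall S 1 :=
  fun s hs => ⟨[s], by simp [hs]⟩

theorem mem_image_mul_left_wordBall_iff {D : ℕ} {x γ : G} :
    γ ∈ (x * ·) '' wordBall S D ↔ x⁻¹ * γ ∈ wordBall S D := by
  simp

end WordBall

section DiagonalNorm

variable {G : Type*} [Group G] {k k' : G × G → ℝ}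

/-- The `ℓ²`-norm of `k` along the diagonal `{(y, y * h⁻¹)}`, as a function of `h`. It averages a
kernel into a function on the group. -/
noncomputable def diagonalNorm (k : G × G → ℝ) (h : G) : ℝ := l2Norm fun y => k (y, y * h⁻¹)

/-- The partition of `G × G` into its diagonals, the first coordinate being the index of the
diagonal. -/
def diagonalEquiv (G : Type*) [Group G] : G × G ≃ G × G where
  toFun p := (p.2, p.2 * p.1⁻¹)
  invFun q := (q.2⁻¹ * q.1, q.1)
  left_inv p := by simp
  right_inv q := by simp

theorem l2Norm_diagonalNorm (hk : Memℓp k 2) : l2Norm (diagonalNorm k) = l2Norm k := by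
  rw [← l2Norm_comp_equiv (diagonalEquiv G) k,
    l2Norm_prod (memℓp_two_comp_equiv (diagonalEquiv G) hk)]
  rfl

theorem memℓp_two_diagonal (hk : Memℓp k 2) (h : G) : Memℓp (fun y => k (y, y * h⁻¹)) 2 :=
  (memℓp_two_prod_iff.1 (memℓp_two_comp_equiv (diagonalEquiv G) hk)).1 h

theorem memℓp_two_diagonalNorm (hk : Memℓp k 2) : Memℓp (diagonalNorm k) 2 :=
  (memℓp_two_prod_iff.1 (memℓp_two_comp_equiv (diagonalEquiv G) hk)).2

theorem l2Norm_diagonalNorm_sub_le (hk : Memℓp k 2) (hk' : Memℓp k' 2) :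
    l2Norm (fun h => diagonalNorm k h - diagonalNorm k' h) ≤ l2Norm fun p => k p - k' p := by
  have hsub : Memℓp (fun p => k p - k' p) 2 := hk.sub hk'
  rw [← l2Norm_diagonalNorm hsub]
  refine l2Norm_mono (memℓp_two_diagonalNorm hsub) fun h => ?_
  exact (abs_l2Norm_sub_l2Norm_le (memℓp_two_diagonal hk h) (memℓp_two_diagonal hk' h)).trans
    (le_abs_self _)

theorem diagonalNorm_mul_right (k : G × G → ℝ) (h s : G) :
    diagonalNorm k (h * s) = diagonalNorm (fun p => k (p.1 * s, p.2)) h := by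
  rw [diagonalNorm, ← l2Norm_comp_equiv (Equiv.mulRight s)]
  simp [diagonalNorm, mul_assoc]

theorem displacement_diagonalNorm_le (hk : Memℓp k 2) (s : G) :
    displacement (diagonalNorm k) s ≤ l2Norm fun p => k p - k (p.1 * s, p.2) := by
  simp only [displacement, diagonalNorm_mul_right]
  exact l2Norm_diagonalNorm_sub_le hk
    (memℓp_two_comp_equiv ((Equiv.mulRight s).prodCongr (Equiv.refl G)) hk)

theorem exists_ne_zero_of_diagonalNorm_ne_zero {h : G} (hh : diagonalNorm k h ≠ 0) :
    ∃ y, k (y, y * h⁻¹) ≠ 0 := by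
  contrapose! hh
  simp [diagonalNorm, l2Norm, hh]

end DiagonalNorm

section Folner

variable {G : Type*} [Group G]

/-- The right Følner condition relative to `S`: for every `δ > 0` there is a nonempty finite subset
of `G` that is `δ`-invariant under right translation by each element of `S`. -/
def FolnerCondition [DecidableEq G] (S : Set G) : Prop :=
  ∀ δ : ℝ, 0 < δ → ∃ F : Finset G, F.Nonempty ∧
    ∀ s ∈ S, ((F \ F.image (· * s)).card : ℝ) ≤ δ * F.card

/-- The characteristic function of `F`, scaled to be a unit vector of `ℓ²(G)`. -/
noncomputable def normalizedIndicator {α : Type*} (F : Finset α) : α → ℝ :=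
  (F : Set α).indicator fun _ => (√F.card)⁻¹

theorem l2Norm_indicator_const {α : Type*} (F : Finset α) (c : ℝ) :
    l2Norm ((F : Set α).indicator fun _ => c) = √F.card * |c| := by
  have hsum : ∑' a, (F : Set α).indicator (fun _ => c) a ^ 2 = F.card * c ^ 2 := by
    rw [tsum_eq_sum (s := F) fun a ha => by simp [ha],
      Finset.sum_congr rfl fun a ha => by rw [Set.indicator_of_mem (Finset.mem_coe.2 ha)],
      Finset.sum_const, nsmul_eq_mul]
  rw [l2Norm, hsum, Real.sqrt_mul (Nat.cast_nonneg _), Real.sqrt_sq_eq_abs]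

theorem l2Norm_normalizedIndicator {α : Type*} {F : Finset α} (hF : F.Nonempty) :
    l2Norm (normalizedIndicator F) = 1 := by
  have hcard : 0 < √(F.card : ℝ) := Real.sqrt_pos.2 (Nat.cast_pos.2 hF.card_pos)
  rw [normalizedIndicator, l2Norm_indicator_const, abs_of_pos (inv_pos.2 hcard),
    mul_inv_cancel₀ hcard.ne']

theorem card_symmDiff_image_mul_right [DecidableEq G] (F : Finset G) (s : G) :
    (F ∆ F.image (· * s)).card = 2 * (F \ F.image (· * s)).card := by
  have hcard := Finset.card_sdiff_comm
    (Finset.card_image_of_injective F (mul_left_injective s))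
  rw [symmDiff, Finset.sup_eq_union, Finset.card_union_of_disjoint disjoint_sdiff_sdiff, hcard,
    two_mul]

theorem displacement_normalizedIndicator [DecidableEq G] (F : Finset G) (s : G) :
    displacement (normalizedIndicator F) s =
      √(2 * (F \ F.image (· * s)).card) * (√F.card)⁻¹ := by
  have htranslate (y : G) : normalizedIndicator F (y * s⁻¹) =
      (F.image (· * s) : Set G).indicator (fun _ => (√F.card)⁻¹) y := by
    simp [normalizedIndicator, Set.indicator]
  have hdiff (y : G) : |normalizedIndicator F y - normalizedIndicator F (y * s⁻¹)| =
      |((F ∆ F.image (· * s) : Finset G) : Set G).indicator (fun _ => (√F.card)⁻¹) y| := by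
    rw [htranslate, normalizedIndicator, Finset.coe_symmDiff, Set.abs_indicator_symmDiff]
  rw [← displacement_inv, displacement, ← l2Norm_abs, funext hdiff, l2Norm_abs,
    l2Norm_indicator_const, card_symmDiff_image_mul_right, Nat.cast_mul,
    Nat.cast_ofNat, abs_of_nonneg (by positivity)]

theorem FolnerCondition.exists_displacement_le [DecidableEq G] {S : Set G}
    (hS : FolnerCondition S) {ε : ℝ} (hε : 0 < ε) :
    ∃ w : G → ℝ, l2Norm w = 1 ∧ ∀ s ∈ S, displacement w s ≤ ε := by
  obtain ⟨F, hF, hFS⟩ := hS (ε ^ 2 / 2) (by positivity)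
  refine ⟨normalizedIndicator F, l2Norm_normalizedIndicator hF, fun s hs => ?_⟩
  have hcard : (0 : ℝ) < F.card := Nat.cast_pos.2 hF.card_pos
  rw [displacement_normalizedIndicator, ← div_eq_mul_inv, ← Real.sqrt_div' _ hcard.le,
    Real.sqrt_le_left hε.le, div_le_iff₀ hcard]
  linarith [hFS s hs]

end Folner

section ReiterFunctionPropertyAKernel

variable {G : Type*} [Group G] {S : Set G} {ε δ : ℝ} {D : ℕ}

/-- `f` is a nonnegative unit vector of `ℓ²(G)` supported in the `D`-ball and moved by at most `ε`
by each element of `S`, as in Reiter's criterion for amenability. -/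
def IsReiterFunction (S : Set G) (ε : ℝ) (D : ℕ) (f : G → ℝ) : Prop :=
  (∀ γ, 0 ≤ f γ) ∧ (∑' γ, f γ ^ 2 = 1) ∧
    (∀ s ∈ S, ∑' γ, (f γ - f (γ * s)) ^ 2 ≤ ε ^ 2) ∧ Function.support f ⊆ wordBall S D

/-- `ξ` witnesses Property A at scale `(ε, R)` for the word metric of `S`: it assigns to each point
a nonnegative unit vector of `ℓ²(G)` supported in the `D`-ball around it, in such a way that points
at distance at most `R` have `ε`-close images. -/
def IsPropertyAKernel (S : Set G) (ε : ℝ) (R D : ℕ) (ξ : G → G → ℝ) : Prop :=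
  (∀ x γ, 0 ≤ ξ x γ) ∧ (∀ x, ∑' γ, ξ x γ ^ 2 = 1) ∧
    (∀ x y, x⁻¹ * y ∈ wordBall S R → ∑' γ, (ξ x γ - ξ y γ) ^ 2 ≤ ε ^ 2) ∧
    ∀ x, Function.support (ξ x) ⊆ (x * ·) '' wordBall S D

theorem l2Norm_inv_mul (f : G → ℝ) (x : G) : l2Norm (fun γ => f (γ⁻¹ * x)) = l2Norm f :=
  l2Norm_comp_equiv ((Equiv.inv G).trans (Equiv.mulRight x)) f

theorem l2Norm_inv_mul_sub (f : G → ℝ) (x y : G) :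
    l2Norm (fun γ => f (γ⁻¹ * x) - f (γ⁻¹ * y)) = displacement f (x⁻¹ * y) := by
  rw [displacement, ← l2Norm_inv_mul (fun γ => f γ - f (γ * (x⁻¹ * y))) x]
  simp only [mul_assoc, mul_inv_cancel_left]

theorem IsReiterFunction.isPropertyAKernel {f : G → ℝ} (hf : IsReiterFunction S δ D f)
    (hδ : 0 ≤ δ) {R : ℕ} (hR : R * δ ≤ ε) :
    IsPropertyAKernel S ε R D fun x γ => f (γ⁻¹ * x) := by
  obtain ⟨hnonneg, hunit, hinvariant, hsupport⟩ := hf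
  rw [← l2Norm_eq_one_iff] at hunit
  refine ⟨fun _ _ => hnonneg _, fun x => ?_, fun x y hxy => ?_, fun x γ hγ => ?_⟩
  · rw [← l2Norm_eq_one_iff, l2Norm_inv_mul, hunit]
  · rw [← l2Norm_le_iff ((by positivity : 0 ≤ R * δ).trans hR), l2Norm_inv_mul_sub]
    refine le_trans ?_ hR
    exact displacement_le_of_mem_wordBall (memℓp_two_of_l2Norm_eq_one hunit) hδ
      (fun s hs => (l2Norm_le_iff hδ).2 (hinvariant s hs)) hxy
  · rw [mem_image_mul_left_wordBall_iff]
    simpa using inv_mem_wordBall (hsupport hγ)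

theorem displacement_diagonalNorm_weighted_le {w : G → ℝ} {ξ : G → G → ℝ} {s : G}
    (hε : 0 ≤ ε) (hw : l2Norm w = 1) (hξ : ∀ y, l2Norm (ξ y) = 1)
    (hξs : ∀ y, l2Norm (fun γ => ξ y γ - ξ (y * s) γ) ≤ ε) :
    displacement (diagonalNorm fun p => w p.1 * ξ p.1 p.2) s ≤ ε + displacement w s := by
  have hwmem := memℓp_two_of_l2Norm_eq_one hw
  have hkernel := memℓp_two_weighted_of_unit hwmem hξ
  have hsub := l2Norm_weighted_sub_weighted_le hwmem (memℓp_two_mul_right hwmem s) hξ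
    (fun y => hξ (y * s)) hξs hε
  rw [hw, mul_one] at hsub
  exact (displacement_diagonalNorm_le hkernel s).trans hsub

theorem IsPropertyAKernel.isReiterFunction {ξ : G → G → ℝ} (hξ : IsPropertyAKernel S ε 1 D ξ)
    (hε : 0 ≤ ε) {w : G → ℝ} (hw : l2Norm w = 1) (hwS : ∀ s ∈ S, displacement w s ≤ δ) :
    IsReiterFunction S (ε + δ) D (diagonalNorm fun p => w p.1 * ξ p.1 p.2) := by
  obtain ⟨-, hunit, hclose, hsupport⟩ := hξ
  simp only [← l2Norm_eq_one_iff] at hunit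
  have hwmem := memℓp_two_of_l2Norm_eq_one hw
  have hkernel := memℓp_two_weighted_of_unit hwmem hunit
  refine ⟨fun _ => l2Norm_nonneg _, ?_, fun s hs => ?_, fun h hh => ?_⟩
  · rw [← l2Norm_eq_one_iff, l2Norm_diagonalNorm hkernel, l2Norm_weighted_of_unit hwmem hunit, hw]
  · have hδ : 0 ≤ δ := (l2Norm_nonneg _).trans (hwS s hs)
    have hξs (y : G) : l2Norm (fun γ => ξ y γ - ξ (y * s) γ) ≤ ε :=
      (l2Norm_le_iff hε).2 (hclose y (y * s) (by simpa using subset_wordBall_one S hs))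
    rw [← l2Norm_le_iff (add_nonneg hε hδ)]
    exact (displacement_diagonalNorm_weighted_le hε hw hunit hξs).trans
      (by gcongr; exact hwS s hs)
  · obtain ⟨y, hy⟩ := exists_ne_zero_of_diagonalNorm_ne_zero hh
    have hball := mem_image_mul_left_wordBall_iff.1 (hsupport y (right_ne_zero_of_mul hy))
    simpa using inv_mem_wordBall hball

end ReiterFunctionPropertyAKernel

section Family

variable {I : Type*} {G : I → Type*} [∀ i, Group (G i)] {S : ∀ i, Set (G i)}

/-- Uniform amenability of the family `(G i, S i)`: the radius `D` does not depend on `i`. -/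
def UniformlyAmenable (S : ∀ i, Set (G i)) : Prop :=
  ∀ ε : ℝ, 0 < ε → ∃ D : ℕ, ∃ f : ∀ i, G i → ℝ, ∀ i, IsReiterFunction (S i) ε D (f i)

/-- Uniform Property A of the family `(G i, S i)`: the radius `D` does not depend on `i`. -/
def UniformPropertyA (S : ∀ i, Set (G i)) : Prop :=
  ∀ ε : ℝ, 0 < ε → ∀ R : ℕ, ∃ D : ℕ, ∃ ξ : ∀ i, G i → G i → ℝ,
    ∀ i, IsPropertyAKernel (S i) ε R D (ξ i)

theorem UniformlyAmenable.uniformPropertyA (h : UniformlyAmenable S) : UniformPropertyA S := by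
  intro ε hε R
  obtain ⟨D, f, hf⟩ := h (ε / (R + 1)) (by positivity)
  have hR : R * (ε / (R + 1)) ≤ ε := by
    rw [mul_div_assoc', div_le_iff₀ (by positivity)]
    linarith
  exact ⟨D, _, fun i => (hf i).isPropertyAKernel (by positivity) hR⟩

theorem UniformPropertyA.uniformlyAmenable [∀ i, DecidableEq (G i)] (h : UniformPropertyA S)
    (hS : ∀ i, FolnerCondition (S i)) : UniformlyAmenable S := by
  intro ε hε
  obtain ⟨D, ξ, hξ⟩ := h (ε / 2) (half_pos hε) 1
  choose w hw hwS using fun i => (hS i).exists_displacement_le (half_pos hε)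
  refine ⟨D, fun i => diagonalNorm fun p => w i p.1 * ξ i p.1 p.2, fun i => ?_⟩
  simpa only [add_halves] using (hξ i).isReiterFunction (half_pos hε).le (hw i) (hwS i)

end Family

theorem stmt_13_general {I : Type*} {G : I → Type*} [∀ i, Group (G i)] [∀ i, DecidableEq (G i)]
    {S : ∀ i, Set (G i)} (hS : ∀ i, FolnerCondition (S i)) :
    UniformlyAmenable S ↔ UniformPropertyA S :=
  ⟨fun h => h.uniformPropertyA, fun h => h.uniformlyAmenable hS⟩

theorem stmt_13 {I : Type*} (G : I → Type*) [∀ i, Group (G i)]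
    [∀ i, DecidableEq (G i)] (S : ∀ i, Finset (G i))
    (hgen : ∀ i, Subgroup.closure ((S i : Set (G i))) = ⊤)
    (hamen : ∀ i, ∀ T : Finset (G i), T.Nonempty → ∀ δ : ℝ, 0 < δ →
      ∃ F : Finset (G i), F.Nonempty ∧
        ∀ g ∈ T, ((F \ F.image (· * g)).card : ℝ) ≤ δ * F.card) :
    (∀ ε : ℝ, 0 < ε → ∃ D : ℕ, ∃ f : ∀ i, G i → ℝ, ∀ i,
      (∀ γ, 0 ≤ f i γ) ∧ (∑' γ, f i γ ^ 2 = 1) ∧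
      (∀ s ∈ S i, ∑' γ, (f i γ - f i (γ * s)) ^ 2 ≤ ε ^ 2) ∧
      Function.support (f i) ⊆ wordBall ((S i : Set (G i))) D)
    ↔
    (∀ ε : ℝ, 0 < ε → ∀ R : ℕ, ∃ D : ℕ, ∃ ξ : ∀ i, G i → G i → ℝ, ∀ i,
      (∀ x γ, 0 ≤ ξ i x γ) ∧ (∀ x, ∑' γ, ξ i x γ ^ 2 = 1) ∧
      (∀ x y : G i, x⁻¹ * y ∈ wordBall ((S i : Set (G i))) R →
        ∑' γ, (ξ i x γ - ξ i y γ) ^ 2 ≤ ε ^ 2) ∧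
      (∀ x : G i, Function.support (ξ i x) ⊆ (x * ·) '' wordBall ((S i : Set (G i))) D)) :=
  stmt_13_general (S := fun i => (S i : Set (G i))) fun i δ hδ =>
    -- `1` makes the test set nonempty even if `S i` is empty.
    (hamen i (insert 1 (S i)) (Finset.insert_nonempty _ _) δ hδ).imp fun _ hF =>
      ⟨hF.1, fun s hs => hF.2 s (Finset.mem_insert_of_mem hs)⟩
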